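/- If (X,φ) is a synchronizing dynamical system, then the set of periodic points of φ is dense in X. -/

import Mathlib

/-!
By compactness, expansiveness is uniform: `φⁿ` contracts all local stable sets at once when `n` is
large, and `φ⁻ⁿ` all local unstable ones. Hence brackets `[u, v] ∈ Xˢ(u, r) ∩ Xᵘ(v, r)` of points
`u, v` close to a synchronizing point `x` exist at every scale `r`.

Let `y` and `φⁿ y` both be close to `x`, with `n` large. The map `f u = φ⁻ⁿ [u, φⁿ y]` preserves the
set of points following the orbit segment `y, …, φⁿ y`, and prepends one more passage along this
segment to the forward orbit of `u`. The error of `φⁿ (f u) ∈ Xˢ(u, r)` is contracted during each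
later passage, so the errors do not accumulate, and `fᵏ y` follows the `n`-periodic repetition of
the segment for `k` passages. A limit point follows it for all times and is periodic by
expansiveness. So periodic points accumulate at every synchronizing point; synchronizing points
form an open set, whose images under `φᵐ` meet every open set by irreducibility.
-/

open Filter Topology Set

namespace Paper

variable {X : Type*} [MetricSpace X] [CompactSpace X]

/-- The `n`-th iterate (for `n : ℤ`) of the homeomorphism `φ`. -/
def It (φ : X ≃ₜ X) (n : ℤ) : X → X := fun x => (φ.toEquiv ^ n) x

/-- The local stable set `Xˢ(x, ε)`. -/
def locS (φ : X ≃ₜ X) (x : X) (ε : ℝ) : Set X :=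
  {y | ∀ n : ℕ, dist (It φ n x) (It φ n y) ≤ ε}

/-- The local unstable set `Xᵘ(x, ε)`. -/
def locU (φ : X ≃ₜ X) (x : X) (ε : ℝ) : Set X :=
  {y | ∀ n : ℕ, dist (It φ (-(n : ℤ)) x) (It φ (-(n : ℤ)) y) ≤ ε}

/-- The set `D_ε` on which the bracket is defined. -/
def Dset (φ : X ≃ₜ X) (ε : ℝ) : Set (X × X) :=
  {p | (locS φ p.1 ε ∩ locU φ p.2 ε).Nonempty}

/-- `(X, φ)` is expansive with expansiveness constant `εX`. -/
def IsExpansive (φ : X ≃ₜ X) (εX : ℝ) : Prop :=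
  0 < εX ∧ ∀ x y : X, (∀ n : ℤ, dist (It φ n x) (It φ n y) ≤ εX) → x = y

/-- The metric is adapted (Fried), with constants `η` and `lam`. -/
def IsAdapted (φ : X ≃ₜ X) (η lam : ℝ) : Prop :=
  0 < η ∧ 0 < lam ∧ lam < 1 ∧
    (∀ x y : X, y ∈ locS φ x η → dist (φ x) (φ y) ≤ lam * dist x y) ∧
    (∀ x y : X, y ∈ locU φ x η → dist (φ.symm x) (φ.symm y) ≤ lam * dist x y)

/-- `p` is a periodic point of `φ`. -/
def IsPeriodic (φ : X ≃ₜ X) (p : X) : Prop :=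
  ∃ n : ℕ, 1 ≤ n ∧ It φ n p = p

/-- `x` is a synchronizing point: `(x, x)` is in the interior of `D_ε` for
some `0 < ε ≤ ε₀`. -/
def IsSyncPt (φ : X ≃ₜ X) (ε₀ : ℝ) (x : X) : Prop :=
  ∃ ε : ℝ, 0 < ε ∧ ε ≤ ε₀ ∧ (x, x) ∈ interior (Dset φ ε)

/-- `(X, φ)` is irreducible. -/
def Irred (φ : X ≃ₜ X) : Prop :=
  ∀ U V : Set X, IsOpen U → IsOpen V → U.Nonempty → V.Nonempty →
    ∃ n : ℕ, 0 < n ∧ (It φ n '' U ∩ V).Nonempty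

/-- `(X, φ)` is mixing. -/
def Mixing (φ : X ≃ₜ X) : Prop :=
  ∀ U V : Set X, IsOpen U → IsOpen V → U.Nonempty → V.Nonempty →
    ∃ N : ℕ, ∀ n : ℕ, N ≤ n → (It φ n '' U ∩ V).Nonempty

/-- Every point of `(X, φ)` is non-wandering. -/
def NonWandering (φ : X ≃ₜ X) : Prop :=
  ∀ x : X, ∀ U ∈ 𝓝 x, ∃ n : ℕ, 0 < n ∧ (It φ n '' U ∩ U).Nonempty

/-- Stable equivalence `x ∼ₛ y`. -/
def StableEq (φ : X ≃ₜ X) (x y : X) : Prop :=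
  Tendsto (fun n : ℕ => dist (It φ n x) (It φ n y)) atTop (𝓝 0)

/-- Unstable equivalence `x ∼ᵤ y`. -/
def UnstableEq (φ : X ≃ₜ X) (x y : X) : Prop :=
  Tendsto (fun n : ℕ => dist (It φ (-(n : ℤ)) x) (It φ (-(n : ℤ)) y)) atTop (𝓝 0)

/-- Local conjugacy `x ∼_lc y`: a homeomorphism `γ : U → V` of open
neighborhoods with `γ x = y` and `sup_{z ∈ U} d(φⁿ z, φⁿ (γ z)) → 0` as
`n → ±∞`. -/
def LocConj (φ : X ≃ₜ X) (x y : X) : Prop :=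
  ∃ (U V : Set X) (γ γinv : X → X),
    IsOpen U ∧ IsOpen V ∧ x ∈ U ∧ y ∈ V ∧ γ x = y ∧
    Set.MapsTo γ U V ∧ Set.MapsTo γinv V U ∧
    (∀ z ∈ U, γinv (γ z) = z) ∧ (∀ w ∈ V, γ (γinv w) = w) ∧
    ContinuousOn γ U ∧ ContinuousOn γinv V ∧
    (∀ ε : ℝ, 0 < ε → ∃ N : ℕ, ∀ n : ℤ, (N : ℤ) ≤ |n| → ∀ z ∈ U,
      dist (It φ n z) (It φ n (γ z)) ≤ ε)

/-- Stable local conjugacy `x ∼_lcs y`: a homeomorphism of `Xᵘ(x, δ)` onto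
its image in `Xᵘ(y, δ')` sending `x` to `y`, uniformly asymptotic in forward
time. -/
def StableLC (φ : X ≃ₜ X) (x y : X) : Prop :=
  ∃ (δ δ' : ℝ) (γ : X → X), 0 < δ ∧ 0 < δ' ∧
    Set.MapsTo γ (locU φ x δ) (locU φ y δ') ∧
    Set.InjOn γ (locU φ x δ) ∧ ContinuousOn γ (locU φ x δ) ∧ γ x = y ∧
    (∀ ε : ℝ, 0 < ε → ∃ N : ℕ, ∀ n : ℕ, N ≤ n → ∀ z ∈ locU φ x δ,
      dist (It φ n z) (It φ n (γ z)) ≤ ε)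

/-- Unstable local conjugacy `x ∼_lcu y`: a homeomorphism of `Xˢ(x, δ)` onto
its image in `Xˢ(y, δ')` sending `x` to `y`, uniformly asymptotic in backward
time. -/
def UnstableLC (φ : X ≃ₜ X) (x y : X) : Prop :=
  ∃ (δ δ' : ℝ) (γ : X → X), 0 < δ ∧ 0 < δ' ∧
    Set.MapsTo γ (locS φ x δ) (locS φ y δ') ∧
    Set.InjOn γ (locS φ x δ) ∧ ContinuousOn γ (locS φ x δ) ∧ γ x = y ∧
    (∀ ε : ℝ, 0 < ε → ∃ N : ℕ, ∀ n : ℕ, N ≤ n → ∀ z ∈ locS φ x δ,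
      dist (It φ (-(n : ℤ)) z) (It φ (-(n : ℤ)) (γ z)) ≤ ε)

open scoped Uniformity

section Iterates

omit [CompactSpace X]

variable {φ : X ≃ₜ X} {x y : X} {ε ε' : ℝ}

theorem It_eq_zpow (φ : X ≃ₜ X) (n : ℤ) : It φ n = ⇑(φ ^ n) :=
  let toPerm : (X ≃ₜ X) →* Equiv.Perm X :=
    { toFun := Homeomorph.toEquiv, map_one' := rfl, map_mul' := fun _ _ => rfl }
  congrArg DFunLike.coe (map_zpow toPerm φ n).symm

theorem continuous_It (φ : X ≃ₜ X) (n : ℤ) : Continuous (It φ n) :=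
  It_eq_zpow φ n ▸ (φ ^ n).continuous

theorem It_zero (φ : X ≃ₜ X) (x : X) : It φ 0 x = x := rfl

theorem It_add (φ : X ≃ₜ X) (m n : ℤ) (x : X) : It φ (m + n) x = It φ m (It φ n x) := by
  simp [It, zpow_add]

theorem It_neg_It (φ : X ≃ₜ X) (n : ℤ) (x : X) : It φ (-n) (It φ n x) = x := by
  rw [← It_add, neg_add_cancel, It_zero]

theorem It_It_neg (φ : X ≃ₜ X) (n : ℤ) (x : X) : It φ n (It φ (-n) x) = x := by
  rw [← It_add, add_neg_cancel, It_zero]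

theorem It_symm (φ : X ≃ₜ X) (n : ℤ) (x : X) : It φ.symm n x = It φ (-n) x :=
  DFunLike.congr_fun (inv_zpow' (φ.toEquiv : Equiv.Perm X) n) x

theorem iterate_It (φ : X ≃ₜ X) (n : ℤ) (k : ℕ) (x : X) : (It φ n)^[k] x = It φ (k * n) x := by
  induction k with
  | zero => simp [It_zero]
  | succ k ih => rw [Function.iterate_succ_apply', ih, ← It_add]; congr 1; push_cast; ring

theorem IsPeriodic.iterate {p : X} (hp : IsPeriodic φ p) (m : ℤ) : IsPeriodic φ (It φ m p) := by
  obtain ⟨n, hn, h⟩ := hp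
  exact ⟨n, hn, by rw [← It_add, add_comm, It_add, h]⟩

theorem locS_symm (φ : X ≃ₜ X) (x : X) (ε : ℝ) : locS φ.symm x ε = locU φ x ε := by
  simp only [locS, locU, It_symm]

theorem dist_le_of_mem_locS (h : y ∈ locS φ x ε) : dist x y ≤ ε := h 0

theorem mem_locS_trans {z : X} (hy : y ∈ locS φ x ε) (hz : z ∈ locS φ y ε') :
    z ∈ locS φ x (ε + ε') :=
  fun n => (dist_triangle _ _ _).trans (add_le_add (hy n) (hz n))

theorem dist_It_le_of_It_mem_locU {n : ℕ} (h : It φ n y ∈ locU φ (It φ n x) ε) {i : ℕ}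
    (hi : i ≤ n) : dist (It φ i x) (It φ i y) ≤ ε := by
  have hback := h (n - i)
  rwa [← It_add, ← It_add, show -((n - i : ℕ) : ℤ) + n = i by omega] at hback

theorem isClosed_setOf_mem_locS (φ : X ≃ₜ X) (ε : ℝ) :
    IsClosed {p : X × X | p.2 ∈ locS φ p.1 ε} := by
  change IsClosed {p : X × X | ∀ n : ℕ, dist (It φ n p.1) (It φ n p.2) ≤ ε}
  rw [ofPred_forall]
  exact isClosed_iInter fun n => isClosed_le
    (((continuous_It φ n).comp continuous_fst).dist ((continuous_It φ n).comp continuous_snd))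
    continuous_const

theorem isClosed_setOf_mem_locU (φ : X ≃ₜ X) (ε : ℝ) :
    IsClosed {p : X × X | p.2 ∈ locU φ p.1 ε} := by
  simpa only [locS_symm] using isClosed_setOf_mem_locS φ.symm ε

end Iterates

section Recurrence

omit [CompactSpace X]

variable {φ : X ≃ₜ X}

theorem Irred.nonWandering (h : Irred φ) : NonWandering φ := fun x U hU => by
  have hx : x ∈ interior U := mem_interior_iff_mem_nhds.2 hU
  obtain ⟨n, hn, hne⟩ := h _ _ isOpen_interior isOpen_interior ⟨x, hx⟩ ⟨x, hx⟩
  exact ⟨n, hn, hne.mono (inter_subset_inter (image_mono interior_subset) interior_subset)⟩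

theorem NonWandering.exists_late_return (h : NonWandering φ) {U : Set X} (hU : IsOpen U)
    (hne : U.Nonempty) (N : ℕ) : ∃ n ≥ N, ∃ y ∈ U, It φ n y ∈ U := by
  induction N with
  | zero =>
    obtain ⟨x, hx⟩ := hne
    exact ⟨0, le_rfl, x, hx, hx⟩
  | succ N ih =>
    obtain ⟨n, hn, y, hy, hyn⟩ := ih
    have hopen : IsOpen (U ∩ It φ n ⁻¹' U) := hU.inter (hU.preimage (continuous_It φ n))
    obtain ⟨m, hm, -, ⟨z, hz, rfl⟩, hzm⟩ := h y _ (hopen.mem_nhds ⟨hy, hyn⟩)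
    exact ⟨n + m, by omega, z, hz.1, by rw [Nat.cast_add, It_add]; exact hzm.2⟩

theorem Irred.dense_of_invariant (h : Irred φ) {P : Set X}
    (hP : ∀ n : ℕ, MapsTo (It φ n) P P) (hint : (interior (closure P)).Nonempty) : Dense P := by
  refine dense_iff_inter_open.2 fun V hV hVne => ?_
  obtain ⟨n, -, -, ⟨x, hx, rfl⟩, hxV⟩ := h _ V isOpen_interior hV hint hVne
  obtain ⟨p, hpV, hp⟩ := mem_closure_iff.1 (interior_subset hx) _
    (hV.preimage (continuous_It φ n)) hxV
  exact ⟨It φ n p, hpV, hP n hp⟩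

theorem isOpen_setOf_isSyncPt (φ : X ≃ₜ X) (ε₀ : ℝ) : IsOpen {x | IsSyncPt φ ε₀ x} := by
  refine isOpen_iff_mem_nhds.2 fun x ⟨ε, hpos, hle, hx⟩ => ?_
  have hdiag : Continuous fun y : X => (y, y) := by fun_prop
  filter_upwards [(isOpen_interior.preimage hdiag).mem_nhds hx] with y hy
  exact ⟨ε, hpos, hle, hy⟩

theorem IsSyncPt.mono {ε₀ ε₁ : ℝ} {x : X} (h : IsSyncPt φ ε₀ x) (hle : ε₀ ≤ ε₁) :
    IsSyncPt φ ε₁ x :=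
  let ⟨ε, hpos, hε, hx⟩ := h
  ⟨ε, hpos, hε.trans hle, hx⟩

end Recurrence

namespace IsExpansive

section Metric

omit [CompactSpace X]

variable {φ : X ≃ₜ X} {εX : ℝ}

theorem symm (hexp : IsExpansive φ εX) : IsExpansive φ.symm εX :=
  ⟨hexp.1, fun x y h => hexp.2 x y fun n => by simpa only [It_symm, neg_neg] using h (-n)⟩

theorem eq_of_mem_locS_of_mem_locU (hexp : IsExpansive φ εX) {ε : ℝ} (hε : ε ≤ εX) {x y : X}
    (hs : y ∈ locS φ x ε) (hu : y ∈ locU φ x ε) : x = y := by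
  refine hexp.2 x y fun n => ?_
  obtain ⟨k, rfl | rfl⟩ := n.eq_nat_or_neg
  · exact (hs k).trans hε
  · exact (hu k).trans hε

theorem It_eq_self_of_shadows_periodic (hexp : IsExpansive φ εX) {δ : ℝ} (hδ : 2 * δ ≤ εX)
    {u : ℤ → X} {n : ℤ} (hu : Function.Periodic u n) {p : X}
    (hp : ∀ m, dist (It φ m p) (u m) ≤ δ) : It φ n p = p := by
  refine hexp.2 _ _ fun m => ?_
  calc dist (It φ m (It φ n p)) (It φ m p)
      ≤ dist (It φ (m + n) p) (u (m + n)) + dist (It φ m p) (u m) := by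
        rw [← It_add, hu m]
        exact dist_triangle_right _ _ _
    _ ≤ δ + δ := add_le_add (hp _) (hp m)
    _ ≤ εX := by linarith

end Metric

variable {φ : X ≃ₜ X} {εX ε r : ℝ}

theorem exists_dist_lt_of_forall_natAbs_le (hexp : IsExpansive φ εX) (hr : 0 < r) :
    ∃ N : ℕ, ∀ x y : X,
      (∀ n : ℤ, n.natAbs ≤ N → dist (It φ n x) (It φ n y) ≤ εX) → dist x y < r := by
  have hfar : IsCompact {p : X × X | r ≤ dist p.1 p.2} :=
    (isClosed_le continuous_const continuous_dist).isCompact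
  obtain ⟨t, ht⟩ := hfar.elim_finite_subcover
    (fun n : ℤ => {p : X × X | εX < dist (It φ n p.1) (It φ n p.2)})
    (fun n => isOpen_lt continuous_const
      (((continuous_It φ n).comp continuous_fst).dist ((continuous_It φ n).comp continuous_snd)))
    (fun p hp => by
      by_contra hsep
      simp only [mem_iUnion, mem_ofPred_eq, not_exists, not_lt] at hsep
      rw [mem_ofPred_eq, hexp.2 _ _ hsep, dist_self] at hp
      exact hr.not_ge hp)
  refine ⟨t.sup Int.natAbs, fun x y h => ?_⟩
  by_contra! hxy
  obtain ⟨n, hn, hlt⟩ := mem_iUnion₂.1 (ht (show (x, y) ∈ _ from hxy))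
  exact (h n (Finset.le_sup hn)).not_gt hlt

theorem exists_It_mem_locS (hexp : IsExpansive φ εX) (hε : ε ≤ εX) (hr : 0 < r) :
    ∃ N : ℕ, ∀ n ≥ N, ∀ x y : X, y ∈ locS φ x ε → It φ n y ∈ locS φ (It φ n x) r := by
  obtain ⟨N, hN⟩ := hexp.exists_dist_lt_of_forall_natAbs_le hr
  refine ⟨N, fun n hn x y hy m => (hN _ _ fun k hk => ?_).le⟩
  obtain ⟨j, hj⟩ := Int.eq_ofNat_of_zero_le (show 0 ≤ k + m + n by omega)
  rw [← It_add, ← It_add, ← It_add, ← It_add, hj]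
  exact (hy j).trans hε

theorem exists_It_neg_mem_locU (hexp : IsExpansive φ εX) (hε : ε ≤ εX) (hr : 0 < r) :
    ∃ N : ℕ, ∀ n ≥ N, ∀ x y : X, y ∈ locU φ x ε →
      It φ (-(n : ℤ)) y ∈ locU φ (It φ (-(n : ℤ)) x) r := by
  simpa only [locS_symm, It_symm] using hexp.symm.exists_It_mem_locS hε hr

theorem eventually_mem_locS (hexp : IsExpansive φ εX) (hε : ε ≤ εX) (hr : 0 < r) :
    ∀ᶠ p : X × X in 𝓤 X, p.2 ∈ locS φ p.1 ε → p.2 ∈ locS φ p.1 r := by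
  obtain ⟨N, hN⟩ := hexp.exists_It_mem_locS hε hr
  have hinitial : ∀ᶠ p : X × X in 𝓤 X, ∀ n ∈ Finset.range N,
      dist (It φ n p.1) (It φ n p.2) < r :=
    (eventually_all_finset _).2 fun n _ =>
      CompactSpace.uniformContinuous_of_continuous (continuous_It φ n)
        (Metric.dist_mem_uniformity hr)
  filter_upwards [hinitial] with p hp hs n
  rcases lt_or_ge n N with hn | hn
  · exact (hp n (Finset.mem_range.2 hn)).le
  · exact dist_le_of_mem_locS (hN n hn _ _ hs)

theorem eventually_mem_locU (hexp : IsExpansive φ εX) (hε : ε ≤ εX) (hr : 0 < r) :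
    ∀ᶠ p : X × X in 𝓤 X, p.2 ∈ locU φ p.1 ε → p.2 ∈ locU φ p.1 r := by
  simpa only [locS_symm] using hexp.symm.eventually_mem_locS hε hr

theorem mem_interior_Dset (hexp : IsExpansive φ εX) (hε : ε ≤ εX) (hr : 0 < r) {x : X}
    (hx : (x, x) ∈ interior (Dset φ ε)) : (x, x) ∈ interior (Dset φ r) := by
  rw [mem_interior_iff_mem_nhds] at hx ⊢
  have hshrink : ∀ᶠ p in 𝓝 (x, x), ∀ w ∈ univ,
      w ∈ locS φ p.1 ε ∩ locU φ p.2 ε → w ∈ locS φ p.1 r ∩ locU φ p.2 r := by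
    refine isCompact_univ.eventually_forall_of_forall_eventually fun w _ => ?_
    have hfst : Continuous fun q : (X × X) × X => (q.1.1, q.2) := by fun_prop
    have hsnd : Continuous fun q : (X × X) × X => (q.1.2, q.2) := by fun_prop
    by_cases hw : w ∈ locS φ x ε ∩ locU φ x ε
    · obtain rfl := hexp.eq_of_mem_locS_of_mem_locU hε hw.1 hw.2
      have hs := (hexp.eventually_mem_locS hε hr).filter_mono (nhds_le_uniformity x)
      have hu := (hexp.eventually_mem_locU hε hr).filter_mono (nhds_le_uniformity x)
      filter_upwards [hfst.continuousAt.eventually hs, hsnd.continuousAt.eventually hu]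
        with q hqs hqu hq
      exact ⟨hqs hq.1, hqu hq.2⟩
    · have hclosed := ((isClosed_setOf_mem_locS φ ε).preimage hfst).inter
        ((isClosed_setOf_mem_locU φ ε).preimage hsnd)
      filter_upwards [hclosed.isOpen_compl.mem_nhds hw] with q hq hmem
      exact absurd hmem hq
  filter_upwards [hx, hshrink] with p ⟨w, hw⟩ hp
  exact ⟨w, hp w trivial hw⟩

end IsExpansive

section Shadowing

variable {φ : X ≃ₜ X}

theorem exists_shadowing_of_forall_finset {u : ℤ → X} {δ : ℝ}
    (h : ∀ t : Finset ℤ, ∃ z, ∀ m ∈ t, dist (It φ m z) (u m) ≤ δ) :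
    ∃ z, ∀ m, dist (It φ m z) (u m) ≤ δ := by
  have hclosed (m : ℤ) : IsClosed {z | dist (It φ m z) (u m) ≤ δ} :=
    isClosed_le ((continuous_It φ m).dist continuous_const) continuous_const
  simpa only [Set.Nonempty, mem_iInter, mem_ofPred_eq] using
    CompactSpace.iInter_nonempty hclosed fun t => by
      simpa only [Set.Nonempty, mem_iInter, mem_ofPred_eq] using h t

theorem exists_shadowing_of_periodic {u : ℤ → X} {n : ℕ} (hn : 0 < n)
    (hu : Function.Periodic u n) {δ : ℝ}
    (h : ∀ k : ℕ, ∃ z, ∀ m < k * n, dist (It φ m z) (u m) ≤ δ) :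
    ∃ z, ∀ m, dist (It φ m z) (u m) ≤ δ := by
  refine exists_shadowing_of_forall_finset fun t => ?_
  set N := t.sup Int.natAbs
  obtain ⟨z, hz⟩ := h (2 * N + 1)
  refine ⟨It φ ((N : ℤ) * n) z, fun m hm => ?_⟩
  have hmN : m.natAbs ≤ N := Finset.le_sup (f := Int.natAbs) hm
  have hNn : N ≤ N * n := Nat.le_mul_of_pos_right N hn
  obtain ⟨j, hj⟩ := Int.eq_ofNat_of_zero_le (show 0 ≤ m + ((N * n : ℕ) : ℤ) by omega)
  have hjk : j < (2 * N + 1) * n := by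
    rw [add_mul, one_mul, mul_assoc]
    omega
  have hperiod : u (m + N * n) = u m := hu.int_mul N m
  rw [← It_add, ← hperiod, ← Nat.cast_mul, hj]
  exact hz j hjk

omit [CompactSpace X]

theorem iterate_iterate_mem_locS {f g : X → X} {B : Set X} {r r' : ℝ} (hr : 0 ≤ r + r')
    (hf : MapsTo f B B) (hgf : ∀ u ∈ B, g (f u) ∈ locS φ u r)
    (hg : ∀ u v, v ∈ locS φ u (r + r') → g v ∈ locS φ (g u) r') (k : ℕ) :
    ∀ u ∈ B, g^[k] (f^[k] u) ∈ locS φ u (r + r') := by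
  induction k with
  | zero => exact fun u _ n => by simpa using hr
  | succ k ih =>
    intro u hu
    -- Splitting off the innermost `f` and the outermost `g` lets `hg` shrink the accumulated error
    -- `r + r'` to `r'` before the new error `r` is added.
    rw [Function.iterate_succ_apply', Function.iterate_succ_apply]
    exact mem_locS_trans (hgf u hu) (hg _ _ (ih (f u) (hf hu)))

theorem exists_shadowing_forward {r : ℝ} (hr : 0 ≤ r) {n : ℕ} {y : X}
    (hcontr : ∀ u v, v ∈ locS φ u (r + r) → It φ n v ∈ locS φ (It φ n u) r)
    (hbracket : ∀ u, It φ n u ∈ locU φ (It φ n y) r → (u, It φ n y) ∈ Dset φ r) (k : ℕ) :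
    ∃ z, ∀ m < k * n, dist (It φ m z) (It φ ((m : ℤ) % n) y) ≤ 3 * r := by
  set B : Set X := {u | It φ n u ∈ locU φ (It φ n y) r}
  have hstep : ∀ u ∈ B, ∃ v, v ∈ B ∧ It φ n v ∈ locS φ u r := fun u hu => by
    obtain ⟨w, hws, hwu⟩ := hbracket u hu
    exact ⟨It φ (-n) w, by rwa [mem_ofPred_eq, It_It_neg], by rwa [It_It_neg]⟩
  choose! f hfB hfS using hstep
  have hyB : y ∈ B := fun i => by simpa using hr
  refine ⟨f^[k] y, fun m hm => ?_⟩
  set i := m / n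
  set j := m % n
  have hik : i ≤ k := (Nat.div_lt_of_lt_mul (mul_comm k n ▸ hm)).le
  have hjn : j ≤ n := (Nat.mod_lt m (Nat.pos_of_lt_mul_left hm)).le
  set u := f^[k - i] y
  have huB : u ∈ B := MapsTo.iterate hfB (k - i) hyB
  have hsplit : It φ m (f^[k] y) = It φ j ((It φ n)^[i] (f^[i] u)) := by
    rw [← Function.iterate_add_apply, Nat.add_sub_cancel' hik, iterate_It, ← It_add]
    exact congrArg (It φ · _) (by exact_mod_cast (Nat.mod_add_div' m n).symm)
  rw [hsplit, ← Int.natCast_mod]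
  calc dist (It φ j ((It φ n)^[i] (f^[i] u))) (It φ j y)
      ≤ dist (It φ j u) (It φ j ((It φ n)^[i] (f^[i] u))) + dist (It φ j y) (It φ j u) := by
        rw [dist_comm (It φ j y)]
        exact dist_triangle_left _ _ _
    _ ≤ (r + r) + r := add_le_add
        (iterate_iterate_mem_locS (add_nonneg hr hr) hfB hfS hcontr i u huB j)
        (dist_It_le_of_It_mem_locU huB hjn)
    _ = 3 * r := by ring

end Shadowing

theorem IsExpansive.exists_isPeriodic_dist_le {φ : X ≃ₜ X} {εX r : ℝ} (hexp : IsExpansive φ εX)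
    (hr : 0 ≤ r) (hrε : 6 * r ≤ εX) {n : ℕ} (hn : 0 < n) {y : X}
    (hcontr : ∀ u v, v ∈ locS φ u (r + r) → It φ n v ∈ locS φ (It φ n u) r)
    (hbracket : ∀ u, It φ n u ∈ locU φ (It φ n y) r → (u, It φ n y) ∈ Dset φ r) :
    ∃ p, IsPeriodic φ p ∧ dist p y ≤ 3 * r := by
  have hperiodic : Function.Periodic (fun m : ℤ => It φ (m % n) y) n := fun m => by
    simp only [Int.add_emod_right]
  obtain ⟨p, hp⟩ := exists_shadowing_of_periodic hn hperiodic
    (exists_shadowing_forward hr hcontr hbracket)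
  exact ⟨p, ⟨n, hn, hexp.It_eq_self_of_shadows_periodic (by linarith) hperiodic hp⟩, hp 0⟩

theorem IsSyncPt.mem_closure_isPeriodic {φ : X ≃ₜ X} {εX : ℝ} {x : X} (hx : IsSyncPt φ εX x)
    (hexp : IsExpansive φ εX) (hnw : NonWandering φ) : x ∈ closure {p | IsPeriodic φ p} := by
  obtain ⟨ε, -, hε, hint⟩ := hx
  refine Metric.mem_closure_iff.2 fun s hs => ?_
  obtain ⟨r, hr, hrs, hrε⟩ : ∃ r > 0, 4 * r ≤ s ∧ 6 * r ≤ εX :=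
    ⟨min s εX / 6, div_pos (lt_min hs hexp.1) (by norm_num),
      by linarith [min_le_left s εX], by linarith [min_le_right s εX]⟩
  obtain ⟨ρ, hρ, hball⟩ := Metric.mem_nhds_iff.1
    (mem_interior_iff_mem_nhds.1 (hexp.mem_interior_Dset hε hr hint))
  rw [← ball_prod_same] at hball
  obtain ⟨N, hN⟩ := hexp.exists_It_mem_locS (show r + r ≤ εX by linarith) hr
  obtain ⟨M, hM⟩ := hexp.exists_It_neg_mem_locU (show r ≤ εX by linarith) (half_pos hρ)
  have hmin : 0 < min (ρ / 2) r := lt_min (half_pos hρ) hr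
  obtain ⟨n, hn, y, hy, hyn⟩ := hnw.exists_late_return Metric.isOpen_ball
    ⟨x, Metric.mem_ball_self hmin⟩ (N + M + 1)
  rw [Metric.mem_ball, lt_min_iff] at hy hyn
  have hbracket (u : X) (hu : It φ n u ∈ locU φ (It φ n y) r) : (u, It φ n y) ∈ Dset φ r := by
    have hyu := hM n (by omega) _ _ hu 0
    simp only [Nat.cast_zero, neg_zero, It_zero, It_neg_It] at hyu
    refine hball ⟨Metric.mem_ball.2 ?_, Metric.mem_ball.2 (by linarith)⟩
    linarith [dist_triangle u y x, dist_comm u y]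
  obtain ⟨p, hp, hpy⟩ :=
    hexp.exists_isPeriodic_dist_le hr.le hrε (by omega) (hN n (by omega)) hbracket
  exact ⟨p, hp, by linarith [dist_triangle x y p, dist_comm x y, dist_comm p y]⟩

theorem periodic_dense_general (φ : X ≃ₜ X) (εX : ℝ) (hexp : IsExpansive φ εX) (hirr : Irred φ)
    (hsync : ∃ x : X, IsSyncPt φ εX x) : Dense {p : X | IsPeriodic φ p} := by
  refine hirr.dense_of_invariant (fun n p hp => hp.iterate n) (hsync.imp fun x hx => ?_)
  exact interior_maximal (fun y hy => hy.mem_closure_isPeriodic hexp hirr.nonWandering)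
    (isOpen_setOf_isSyncPt φ εX) hx

/-- in a synchronizing system, periodic points are dense. -/
theorem periodic_dense (φ : X ≃ₜ X) (εX η lam : ℝ)
    (hexp : IsExpansive φ εX) (had : IsAdapted φ η lam) (hirr : Irred φ)
    (hsync : ∃ x : X, IsSyncPt φ (min η (εX / 2)) x) :
    Dense {p : X | IsPeriodic φ p} :=
  periodic_dense_general φ εX hexp hirr <| hsync.imp fun _ hx =>
    hx.mono ((min_le_right _ _).trans (half_le_self hexp.1.le))

end Paper
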